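/- arXiv:2005.13168 — 3 statements merged into one kernel-verified Lean document; each statement's English description precedes it below -/
import Mathlib

section
/- Let γ : [0,1] → ℝ² be a closed curve with image K, and let A = {p ∈ ℝ² : dist(p, K) < 1} be the open 1-neighbourhood of K. Suppose K is a deformation retract of A in the following sense: there is a continuous map r : A → K with r(x) = x for all x ∈ K, such that the composition of r with the inclusion K ↪ A is homotopic to the identity map of A. Then every bounded connected component P of ℝ² \ K contains a point c with dist(c, K) ≥ 1; consequently the open ball of radius 1 centred at c is contained in P. In particular, each bounded complementary component of such a curve contains an open disk of radius 1. -/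
noncomputable section

/-- A continuous nowhere vanishing self-map of the complex plane cannot fix a circle around the
origin pointwise. -/
lemma no_nonvanishing_extension (F : C(ℂ, ℂ)) (hF : ∀ z, F z ≠ 0) (R : ℝ) (hR : 0 < R)
    (hid : ∀ z : ℂ, ‖z‖ = R → F z = z) : False := by
  obtain ⟨G, ⟨-, hG⟩, -⟩ := Complex.isCoveringMapOn_exp.existsUnique_continuousMap_lifts F
    (a₀ := 0) (e₀ := Complex.log (F 0)) (Complex.exp_log (hF 0)) (fun a => hF a)
  have hG' : ∀ z, Complex.exp (G z) = F z := fun z => congrFun hG z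
  let c : C(ℝ, ℂ) := ⟨fun t => R * Complex.exp (t * Complex.I), by fun_prop⟩
  have hc : ∀ t, c t = R * Complex.exp (t * Complex.I) := fun t => rfl
  have hcn : ∀ t, ‖c t‖ = R := by
    intro t
    rw [hc, norm_mul, Complex.norm_exp_ofReal_mul_I]
    simp [abs_of_pos hR]
  have hc0 : c 0 = R := by simp [hc]
  have hexp : Complex.exp (G R) = R := by
    rw [hG', hid]
    simp [abs_of_pos hR]
  let h1 : C(ℝ, ℂ) := G.comp c
  let h2 : C(ℝ, ℂ) := ⟨fun t => G R + t * Complex.I, by fun_prop⟩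
  have hu := Complex.isCoveringMapOn_exp.existsUnique_continuousMap_lifts c
    (a₀ := 0) (e₀ := G R) (by rw [hexp, hc0]) (fun a => by
      have := hcn a
      simp only [Set.mem_compl_iff, Set.mem_singleton_iff]
      intro h
      rw [h, norm_zero] at this
      exact hR.ne this)
  have heq : h1 = h2 := by
    refine hu.unique ⟨?_, ?_⟩ ⟨?_, ?_⟩
    · simp [h1, hc0]
    · funext t
      simp [h1, hG', hid _ (hcn t)]
    · simp [h2]
    · funext t
      simp [h2, Complex.exp_add, hexp, hc]
  have h := congrArg (fun k : C(ℝ, ℂ) => k (2 * Real.pi)) heq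
  have hc2 : c (2 * Real.pi) = R := by
    rw [hc]
    push_cast
    rw [Complex.exp_two_pi_mul_I, mul_one]
  simp [h1, h2, hc2, Real.pi_ne_zero] at h

/-- A continuous self-map of the plane which is the identity outside a bounded set is onto. -/
lemma plane_surj (f : EuclideanSpace ℝ (Fin 2) → EuclideanSpace ℝ (Fin 2)) (hf : Continuous f)
    (P : Set (EuclideanSpace ℝ (Fin 2))) (hP : Bornology.IsBounded P)
    (hid : ∀ x, x ∉ P → f x = x) (p : EuclideanSpace ℝ (Fin 2)) (hp : ∀ x, f x ≠ p) : False := by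
  let e := Complex.orthonormalBasisOneI.repr
  obtain ⟨R, hR, hPR⟩ := hP.subset_ball_lt 0 p
  refine no_nonvanishing_extension ⟨fun z => e.symm (f (e z + p) - p), by fun_prop⟩ ?_ R hR ?_
  · intro z h
    have h' : e.symm (f (e z + p) - p) = 0 := h
    rw [LinearIsometryEquiv.map_eq_zero_iff, sub_eq_zero] at h'
    exact hp _ h'
  · intro z hz
    have hn : e z + p ∉ P := by
      intro hm
      have := hPR hm
      simp [hz] at this
    simp [hid _ hn]

/-- **Proposition 2.7.**  Let `γ` be a closed plane curve with image `K`, and let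
`A` be the open `1`-neighbourhood of `K`.  If `K` is a deformation retract of `A`
(there is a retraction `r : A → K ⊆ A` homotopic to the identity of `A`), then every
bounded connected component `P` of the complement of `K` contains a point `c` at
distance at least `1` from `K`; consequently the open unit ball centred at `c` is
contained in `P`. -/
theorem unit_disk_in_bounded_component
    (γ : ℝ → EuclideanSpace ℝ (Fin 2))
    (hγ : ContinuousOn γ (Set.Icc 0 1)) (hloop : γ 0 = γ 1)
    (K : Set (EuclideanSpace ℝ (Fin 2))) (hK : K = γ '' Set.Icc 0 1)
    (A : Set (EuclideanSpace ℝ (Fin 2)))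
    (hA : A = {p | Metric.infDist p K < 1})
    (r : C(A, A))
    (hrK : ∀ x : A, (r x : EuclideanSpace ℝ (Fin 2)) ∈ K)
    (hrid : ∀ x : A, (x : EuclideanSpace ℝ (Fin 2)) ∈ K →
      (r x : EuclideanSpace ℝ (Fin 2)) = (x : EuclideanSpace ℝ (Fin 2)))
    (hhom : r.Homotopic (ContinuousMap.id A)) :
    ∀ p : EuclideanSpace ℝ (Fin 2), p ∉ K →
      Bornology.IsBounded (connectedComponentIn Kᶜ p) →
      ∃ c ∈ connectedComponentIn Kᶜ p, 1 ≤ Metric.infDist c K ∧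
        Metric.ball c 1 ⊆ connectedComponentIn Kᶜ p := by
  intro p hpK hbd
  have hKc : IsCompact K := hK ▸ isCompact_Icc.image_of_continuousOn hγ
  have hKne : K.Nonempty := hK ▸ ⟨γ 0, 0, by simp, rfl⟩
  have hKA : K ⊆ A := by
    intro x hx
    rw [hA]
    simp [Metric.infDist_zero_of_mem hx]
  have hKo : IsOpen Kᶜ := hKc.isClosed.isOpen_compl
  have hfr : frontier (connectedComponentIn Kᶜ p) ⊆ K := by
    intro x hx
    by_contra hxK
    have hPo : IsOpen (connectedComponentIn Kᶜ p) := hKo.connectedComponentIn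
    rw [hPo.frontier_eq] at hx
    obtain ⟨y, hyQ, hyP⟩ := mem_closure_iff.1 hx.1 (connectedComponentIn Kᶜ x)
      hKo.connectedComponentIn (mem_connectedComponentIn hxK)
    apply hx.2
    rw [connectedComponentIn_eq hyP, ← connectedComponentIn_eq hyQ]
    exact mem_connectedComponentIn hxK
  by_cases hex : ∃ c ∈ connectedComponentIn Kᶜ p, 1 ≤ Metric.infDist c K
  · obtain ⟨c, hcP, hc1⟩ := hex
    refine ⟨c, hcP, hc1, ?_⟩
    rw [connectedComponentIn_eq hcP]
    refine (convex_ball c 1).isPreconnected.subset_connectedComponentIn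
      (Metric.mem_ball_self one_pos) ?_
    intro x hx hxK
    have h1 := Metric.infDist_le_dist_of_mem (x := c) hxK
    rw [Metric.mem_ball'] at hx
    linarith
  · exfalso
    push Not at hex
    have hPA : connectedComponentIn Kᶜ p ⊆ A := by
      intro x hx
      rw [hA]
      exact hex x hx
    have hclA : closure (connectedComponentIn Kᶜ p) ⊆ A := by
      rw [closure_eq_self_union_frontier]
      exact Set.union_subset hPA (hfr.trans hKA)
    classical
    let r' : EuclideanSpace ℝ (Fin 2) → EuclideanSpace ℝ (Fin 2) :=
      fun x => if h : x ∈ A then (r ⟨x, h⟩ : EuclideanSpace ℝ (Fin 2)) else x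
    have hr' : ∀ x (h : x ∈ A), r' x = r ⟨x, h⟩ := fun x h => dif_pos h
    have hr'c : ContinuousOn r' A := by
      rw [continuousOn_iff_continuous_domRestrict]
      have : A.domRestrict r' = fun x => (r x : EuclideanSpace ℝ (Fin 2)) := by
        funext x
        exact hr' x x.2
      rw [this]
      fun_prop
    refine plane_surj ((connectedComponentIn Kᶜ p).piecewise r' id) ?_ _ hbd
      (fun x hx => by simp [hx]) p ?_
    · refine continuous_piecewise ?_ (hr'c.mono hclA) continuousOn_id
      intro x hx
      rw [hr' x (hKA (hfr hx))]
      exact hrid _ (hfr hx)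
    · intro x hx
      by_cases hxP : x ∈ connectedComponentIn Kᶜ p
      · rw [Set.piecewise_eq_of_mem _ _ _ hxP, hr' x (hPA hxP)] at hx
        exact hpK (hx ▸ hrK _)
      · rw [Set.piecewise_eq_of_notMem _ _ _ hxP] at hx
        have hx' : x = p := hx
        rw [hx'] at hxP
        exact hxP (mem_connectedComponentIn hpK)


end
end

section
/- Let γ : [0,1] → ℝ² be a closed curve of finite length ℓ (total variation). If every bounded connected component of the complement of the image of γ contains an open ball of radius 1, then the collection of bounded complementary components is finite and its cardinality is at most (ℓ/(2π))². -/
open scoped ENNReal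

noncomputable section

namespace IsoAux

open MeasureTheory Set

lemma aux_inner {S : Set ℝ} (hS : MeasurableSet S) (hne : S.Nonempty) {c u : ℝ≥0∞}
    (h : ∀ K ⊆ S, IsCompact K → K.Nonempty → volume K + c ≤ u) : volume S + c ≤ u := by
  obtain ⟨s0, hs0⟩ := hne
  by_cases hc : c = ⊤
  · have := h {s0} (by simpa using hs0) isCompact_singleton (by simp)
    rw [hc] at this ⊢
    simpa using this
  have : volume S ≤ u - c := by
    apply le_of_forall_lt
    intro a ha
    obtain ⟨K, hK, hKc, hlt⟩ := hS.exists_lt_isCompact ha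
    have h1 := h (insert s0 K) (insert_subset hs0 hK) (hKc.insert s0) (by simp)
    have h2 : volume K + c ≤ u := le_trans (by gcongr; simp) h1
    exact hlt.trans_le (ENNReal.le_sub_of_add_le_right hc h2)
  have hcu : c ≤ u := le_trans (by simp) (h {s0} (by simpa using hs0) isCompact_singleton (by simp))
  calc volume S + c ≤ (u - c) + c := by gcongr
    _ = u := tsub_add_cancel_of_le hcu

lemma bm1_compact {S T U : Set ℝ} (hS : IsCompact S) (hT : IsCompact T) (hSn : S.Nonempty)
    (hTn : T.Nonempty) (h : ∀ s ∈ S, ∀ t ∈ T, s + t ∈ U) :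
    volume S + volume T ≤ volume U := by
  obtain ⟨a, haS, ha⟩ := hS.exists_isGreatest hSn
  obtain ⟨b, hbT, hb⟩ := hT.exists_isLeast hTn
  have h1 : volume ((fun x => x + b) '' S) = volume S := by simp
  have h2 : volume ((fun x => a + x) '' T) = volume T := by simp
  have hm : MeasurableSet ((fun x => a + x) '' T) :=
    (hT.image (by fun_prop)).measurableSet
  have h3 := measure_union_add_inter (μ := volume) ((fun x => x + b) '' S) hm
  have h4 : volume ((fun x => x + b) '' S ∩ (fun x => a + x) '' T) = 0 := by
    apply measure_mono_null (t := {a + b}) _ (by simp)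
    rintro _ ⟨⟨s, hs, rfl⟩, ⟨t, ht, hst⟩⟩
    have := ha hs
    have := hb ht
    simp only [mem_singleton_iff] at *
    linarith
  rw [h1, h2, h4, add_zero] at h3
  rw [← h3]
  apply measure_mono
  rintro _ (⟨s, hs, rfl⟩ | ⟨t, ht, rfl⟩)
  · exact h s hs b hbT
  · exact h a haS t ht

lemma bm1 {S T U : Set ℝ} (hS : MeasurableSet S) (hT : MeasurableSet T) (hSn : S.Nonempty)
    (hTn : T.Nonempty) (h : ∀ s ∈ S, ∀ t ∈ T, s + t ∈ U) :
    volume S + volume T ≤ volume U := by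
  apply aux_inner hS hSn
  intro K hK hKc hKn
  rw [add_comm]
  apply aux_inner hT hTn
  intro K' hK' hKc' hKn'
  rw [add_comm]
  exact bm1_compact hKc hKc' hKn hKn' fun s hs t ht => h s (hK hs) t (hK' ht)

lemma layer_one {f : ℝ → ℝ} (hf : Measurable f) (h0 : ∀ y, 0 ≤ f y) (h1 : ∀ y, f y ≤ 1) :
    ∫⁻ y, ENNReal.ofReal (f y) = ∫⁻ t in Ioo (0:ℝ) 1, volume {y | t < f y} := by
  rw [lintegral_eq_lintegral_meas_lt volume (Filter.Eventually.of_forall h0) hf.aemeasurable]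
  have : Ioi (0:ℝ) = Ioo 0 1 ∪ Ici 1 := by
    ext x; simp only [mem_Ioi, mem_union, mem_Ioo, mem_Ici]
    constructor
    · intro h; by_cases h' : x < 1
      · exact Or.inl ⟨h, h'⟩
      · exact Or.inr (not_lt.1 h')
    · rintro (h | h)
      · exact h.1
      · linarith
  rw [this, lintegral_union measurableSet_Ici]
  · have : ∫⁻ t in Ici (1:ℝ), volume {y | t < f y} = 0 := by
      rw [setLIntegral_congr_fun (g := fun _ => 0) measurableSet_Ici]
      · simp
      · intro t ht
        have : {y | t < f y} = ∅ := by
          ext y; simp only [mem_ofPred_eq, mem_empty_iff_false, iff_false, not_lt]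
          exact (h1 y).trans ht
        simp [this]
    rw [this, add_zero]
  · rw [disjoint_left]
    intro x hx hx'
    exact absurd hx.2 (not_lt.2 hx')

lemma level {f g h : ℝ → ℝ} (hf : Measurable f) (hg : Measurable g) (hh : Measurable h)
    (f0 : ∀ y, 0 ≤ f y) (g0 : ∀ y, 0 ≤ g y) (h0 : ∀ y, 0 ≤ h y)
    {M m : ℝ} (hM : IsLUB (range f) M) (hm : IsLUB (range g) m) (M0 : 0 < M) (m0 : 0 < m)
    (H : ∀ y z, 0 < f y → 0 < g z → f y + g z ≤ h (y + z)) :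
    (∫⁻ y, ENNReal.ofReal (f y / M)) + (∫⁻ y, ENNReal.ofReal (g y / m))
      ≤ ∫⁻ y, ENNReal.ofReal (h y / (M + m)) := by
  have fM : ∀ y, f y ≤ M := fun y => hM.1 ⟨y, rfl⟩
  have gm : ∀ y, g y ≤ m := fun y => hm.1 ⟨y, rfl⟩
  rw [layer_one (by fun_prop) (fun y => by have := f0 y; positivity)
      (fun y => (div_le_one M0).2 (fM y)),
    layer_one (by fun_prop) (fun y => by have := g0 y; positivity)
      (fun y => (div_le_one m0).2 (gm y)),
    lintegral_eq_lintegral_meas_lt volume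
      (Filter.Eventually.of_forall fun y => by have := h0 y; positivity)
      (by fun_prop)]
  rw [← lintegral_add_left']
  · refine le_trans ?_ (lintegral_mono_set (s := Ioo (0:ℝ) 1) (fun x hx => hx.1))
    apply setLIntegral_mono' measurableSet_Ioo
    intro t ht
    apply bm1
    · exact measurableSet_lt measurable_const (by fun_prop)
    · exact measurableSet_lt measurable_const (by fun_prop)
    · obtain ⟨_, ⟨y, rfl⟩, hy, -⟩ := hM.exists_between (show t * M < M by nlinarith [ht.2])
      exact ⟨y, (lt_div_iff₀ M0).2 hy⟩
    · obtain ⟨_, ⟨y, rfl⟩, hy, -⟩ := hm.exists_between (show t * m < m by nlinarith [ht.2])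
      exact ⟨y, (lt_div_iff₀ m0).2 hy⟩
    · intro y hy z hz
      simp only [mem_ofPred_eq] at *
      rw [lt_div_iff₀ M0] at hy
      rw [lt_div_iff₀ m0] at hz
      rw [lt_div_iff₀ (by positivity)]
      have := H y z (lt_trans (mul_pos ht.1 M0) hy) (lt_trans (mul_pos ht.1 m0) hz)
      linarith
  · apply Measurable.aemeasurable
    apply Antitone.measurable
    intro s t hst
    apply measure_mono
    intro y hy
    exact lt_of_le_of_lt hst hy

/-- length of horizontal slice -/
def slc (A : Set (ℝ × ℝ)) (y : ℝ) : ℝ := (volume ((fun x => (x, y)) ⁻¹' A)).toReal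

lemma slc_bd {A : Set (ℝ × ℝ)} (hb : Bornology.IsBounded A) :
    ∃ R : ℝ, 0 ≤ R ∧ ∀ y, volume ((fun x => (x, y)) ⁻¹' A) ≤ ENNReal.ofReal R := by
  obtain ⟨R, hR⟩ := hb.subset_closedBall 0
  refine ⟨2 * |R|, by positivity, fun y => ?_⟩
  calc volume ((fun x => (x, y)) ⁻¹' A) ≤ volume (Icc (-|R|) |R|) := by
        apply measure_mono
        intro x hx
        have h1 := hR hx
        rw [mem_closedBall_zero_iff, Prod.norm_def] at h1
        have h2 := (le_max_left _ _).trans h1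
        exact abs_le.1 (h2.trans (le_abs_self R))
    _ = _ := by rw [Real.volume_Icc]; congr 1; ring

lemma slc_meas {A : Set (ℝ × ℝ)} (hA : MeasurableSet A) : Measurable (slc A) :=
  (measurable_measure_prodMk_right hA).ennreal_toReal

lemma slc_int {A : Set (ℝ × ℝ)} (hA : MeasurableSet A) (hb : Bornology.IsBounded A) {M : ℝ}
    (M0 : 0 < M) :
    ∫⁻ y, ENNReal.ofReal (slc A y / M) = ENNReal.ofReal ((volume A).toReal / M) := by
  obtain ⟨R, R0, hR⟩ := slc_bd hb
  have : ∀ y, ENNReal.ofReal (slc A y / M)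
      = (ENNReal.ofReal M)⁻¹ * volume ((fun x => (x, y)) ⁻¹' A) := by
    intro y
    rw [ENNReal.ofReal_div_of_pos M0, slc, ENNReal.ofReal_toReal, ENNReal.div_eq_inv_mul]
    exact ((hR y).trans_lt ENNReal.ofReal_lt_top).ne
  simp_rw [this]
  rw [lintegral_const_mul _ (measurable_measure_prodMk_right hA), ENNReal.ofReal_div_of_pos M0,
    ENNReal.ofReal_toReal hb.measure_lt_top.ne, ENNReal.div_eq_inv_mul,
    Measure.volume_eq_prod, Measure.prod_apply_symm hA]

lemma slc_lub {A : Set (ℝ × ℝ)} (hA : MeasurableSet A) (hb : Bornology.IsBounded A)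
    (hp : 0 < (volume A).toReal) : ∃ M, 0 < M ∧ IsLUB (range (slc A)) M := by
  obtain ⟨R, R0, hR⟩ := slc_bd hb
  have hbd : BddAbove (range (slc A)) := by
    refine ⟨R, ?_⟩
    rintro _ ⟨y, rfl⟩
    exact ENNReal.toReal_le_of_le_ofReal R0 (hR y)
  refine ⟨_, ?_, isLUB_ciSup hbd⟩
  by_contra hcon
  have h0 : ∀ y, slc A y = 0 := fun y =>
    le_antisymm ((le_ciSup hbd y).trans (not_lt.1 hcon)) ENNReal.toReal_nonneg
  have := slc_int hA hb one_pos
  simp [h0] at this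
  linarith

lemma bm2 {A B C : Set (ℝ × ℝ)} (hA : MeasurableSet A) (hB : MeasurableSet B)
    (hC : MeasurableSet C) (bA : Bornology.IsBounded A) (bB : Bornology.IsBounded B)
    (bC : Bornology.IsBounded C) (pA : 0 < (volume A).toReal) (pB : 0 < (volume B).toReal)
    (H : ∀ p ∈ A, ∀ q ∈ B, p + q ∈ C) :
    (√(volume A).toReal + √(volume B).toReal) ^ 2 ≤ (volume C).toReal := by
  obtain ⟨M, M0, hM⟩ := slc_lub hA bA pA
  obtain ⟨m, m0, hm⟩ := slc_lub hB bB pB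
  have key := level (slc_meas hA) (slc_meas hB) (slc_meas hC) (fun _ => ENNReal.toReal_nonneg)
    (fun _ => ENNReal.toReal_nonneg) (fun _ => ENNReal.toReal_nonneg) hM hm M0 m0 (by
      intro y z hy hz
      obtain ⟨R, R0, hR⟩ := slc_bd bC
      have hy' := ENNReal.toReal_pos_iff.1 hy
      have hz' := ENNReal.toReal_pos_iff.1 hz
      unfold slc
      rw [← ENNReal.toReal_add hy'.2.ne hz'.2.ne]
      apply ENNReal.toReal_mono ((hR _).trans_lt ENNReal.ofReal_lt_top).ne
      apply bm1
      · exact measurable_prodMk_right hA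
      · exact measurable_prodMk_right hB
      · exact nonempty_of_measure_ne_zero hy'.1.ne'
      · exact nonempty_of_measure_ne_zero hz'.1.ne'
      · intro s hs t ht
        exact H _ hs _ ht)
  rw [slc_int hA bA M0, slc_int hB bB m0, slc_int hC bC (by positivity),
    ← ENNReal.ofReal_add (by positivity) (by positivity),
    ENNReal.ofReal_le_ofReal_iff (by positivity)] at key
  generalize (volume A).toReal = a at *
  generalize (volume B).toReal = b at *
  generalize (volume C).toReal = c at *
  rw [le_div_iff₀ (by positivity)] at key
  obtain ⟨u, u0, rfl⟩ : ∃ u, 0 ≤ u ∧ a = u ^ 2 := ⟨√a, by positivity, (Real.sq_sqrt pA.le).symm⟩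
  obtain ⟨v, v0, rfl⟩ : ∃ u, 0 ≤ u ∧ b = u ^ 2 := ⟨√b, by positivity, (Real.sq_sqrt pB.le).symm⟩
  rw [Real.sqrt_sq u0, Real.sqrt_sq v0]
  refine le_trans ?_ key
  have : (u ^ 2 / M + v ^ 2 / m) * (M + m) - (u + v) ^ 2 = (u * m - v * M) ^ 2 / (M * m) := by
    field_simp
    ring
  have h2 : 0 ≤ (u * m - v * M) ^ 2 / (M * m) := by positivity
  linarith

abbrev EE := EuclideanSpace ℝ (Fin 2)

def psi (p : ℝ × ℝ) : EE := !₂[p.1, p.2]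

lemma psi_mp : MeasurePreserving psi volume volume :=
  (PiLp.volume_preserving_toLp (Fin 2)).comp (volume_preserving_finTwoArrow ℝ).symm

lemma psi_vol {S : Set EE} (hS : MeasurableSet S) : volume (psi ⁻¹' S) = volume S :=
  psi_mp.measure_preimage hS.nullMeasurableSet

lemma psi_add (p q : ℝ × ℝ) : psi (p + q) = psi p + psi q := by
  ext i; fin_cases i <;> simp [psi]

lemma psi_norm (p : ℝ × ℝ) : ‖psi p‖ = √(p.1 ^ 2 + p.2 ^ 2) := by
  simp [psi, EuclideanSpace.norm_eq]

lemma psi_bdd {S : Set EE} (hS : Bornology.IsBounded S) : Bornology.IsBounded (psi ⁻¹' S) := by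
  obtain ⟨R, hR⟩ := hS.subset_closedBall 0
  apply (Metric.isBounded_closedBall (x := (0 : ℝ × ℝ)) (r := R)).subset
  intro p hp
  have := hR hp
  rw [mem_closedBall_zero_iff, psi_norm] at this
  rw [mem_closedBall_zero_iff, Prod.norm_def]
  refine le_trans (max_le ?_ ?_) this
  · apply Real.abs_le_sqrt; nlinarith [sq_nonneg p.2]
  · apply Real.abs_le_sqrt; nlinarith [sq_nonneg p.1]

lemma bmE {A B C : Set EE} (hA : MeasurableSet A) (hB : MeasurableSet B)
    (hC : MeasurableSet C) (bA : Bornology.IsBounded A) (bB : Bornology.IsBounded B)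
    (bC : Bornology.IsBounded C) (pA : 0 < (volume A).toReal) (pB : 0 < (volume B).toReal)
    (H : ∀ p ∈ A, ∀ q ∈ B, p + q ∈ C) :
    (√(volume A).toReal + √(volume B).toReal) ^ 2 ≤ (volume C).toReal := by
  rw [← psi_vol hA, ← psi_vol hB, ← psi_vol hC]
  rw [← psi_vol hA] at pA
  rw [← psi_vol hB] at pB
  refine bm2 (psi_mp.measurable hA) (psi_mp.measurable hB) (psi_mp.measurable hC) (psi_bdd bA)
    (psi_bdd bB) (psi_bdd bC) pA pB fun p hp q hq => ?_
  simp only [mem_preimage, psi_add] at *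
  exact H _ hp _ hq

/-- the difference of two discs, horizontal translation -/
lemma disc_diff_hor {d ρ : ℝ} (hd : 0 ≤ d) (hρ : 0 < ρ) :
    volume (Metric.ball (psi (d, 0)) ρ \ Metric.ball (0 : EE) ρ) ≤ ENNReal.ofReal (2 * ρ * d) := by
  have hm : MeasurableSet (Metric.ball (psi (d, 0)) ρ \ Metric.ball (0 : EE) ρ) :=
    measurableSet_ball.diff measurableSet_ball
  rw [← psi_vol hm, Measure.volume_eq_prod, Measure.prod_apply_symm (psi_mp.measurable hm)]
  have mem : ∀ x y, (x, y) ∈ psi ⁻¹' (Metric.ball (psi (d, 0)) ρ \ Metric.ball (0 : EE) ρ) →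
      (x - d) ^ 2 + y ^ 2 < ρ ^ 2 ∧ ρ ^ 2 ≤ x ^ 2 + y ^ 2 := by
    rintro x y ⟨h1, h2⟩
    have e : psi (x, y) - psi (d, 0) = psi (x - d, y) := by
      ext i; fin_cases i <;> simp [psi]
    rw [mem_ball_iff_norm, e, psi_norm, Real.sqrt_lt' hρ] at h1
    rw [mem_ball_zero_iff, psi_norm, not_lt, Real.le_sqrt hρ.le (by positivity)] at h2
    exact ⟨h1, h2⟩
  calc _ ≤ ∫⁻ y : ℝ, (Ioo (-ρ) ρ).indicator (fun _ => ENNReal.ofReal d) y := by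
        apply lintegral_mono
        intro y
        by_cases hy : y ∈ Ioo (-ρ) ρ
        · rw [indicator_of_mem hy]
          have hs : 0 ≤ ρ ^ 2 - y ^ 2 := by nlinarith [hy.1, hy.2]
          calc _ ≤ volume (Icc (√(ρ ^ 2 - y ^ 2)) (√(ρ ^ 2 - y ^ 2) + d)) := by
                apply measure_mono
                intro x hx
                obtain ⟨h1, h2⟩ := mem x y hx
                have h3 := Real.sq_sqrt hs
                have h0 := Real.sqrt_nonneg (ρ ^ 2 - y ^ 2)
                set s := √(ρ ^ 2 - y ^ 2)
                have h4 : |x - d| < s := abs_lt_of_sq_lt_sq (by linarith) h0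
                rw [abs_lt] at h4
                refine ⟨?_, by linarith⟩
                by_contra hlt
                nlinarith
            _ = _ := by rw [Real.volume_Icc]; congr 1; ring
        · rw [indicator_of_notMem hy]
          have : (fun x => (x, y)) ⁻¹'
              (psi ⁻¹' (Metric.ball (psi (d, 0)) ρ \ Metric.ball (0 : EE) ρ)) = ∅ := by
            ext x
            simp only [mem_empty_iff_false, iff_false]
            intro hx
            obtain ⟨h1, h2⟩ := mem x y hx
            apply hy
            exact abs_lt.1 (abs_lt_of_sq_lt_sq (by nlinarith [sq_nonneg (x - d)]) hρ.le)
          exact (le_of_eq ((congrArg volume this).trans measure_empty))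
    _ = _ := by
        rw [lintegral_indicator measurableSet_Ioo, setLIntegral_const, Real.volume_Ioo,
          ← ENNReal.ofReal_mul hd]
        congr 1; ring

lemma disc_diff (p q : EE) {ρ : ℝ} (hρ : 0 < ρ) :
    volume (Metric.ball q ρ \ Metric.ball p ρ) ≤ ENNReal.ofReal (2 * ρ * dist q p) := by
  have hn : ‖psi (‖q - p‖, 0)‖ = ‖q - p‖ := by rw [psi_norm]; simp
  set w := psi (‖q - p‖, 0) with hw
  set R : EE ≃ₗᵢ[ℝ] EE := (ℝ ∙ (w - (q - p)))ᗮ.reflection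
  have hR : R w = q - p := Submodule.reflection_sub hn
  have h1 := disc_diff_hor (norm_nonneg (q - p)) hρ
  rw [dist_eq_norm]
  refine le_trans (le_of_eq ?_) h1
  have hm : MeasurableSet (Metric.ball q ρ \ Metric.ball p ρ) :=
    measurableSet_ball.diff measurableSet_ball
  have mp : MeasurePreserving (fun x => R x + p) volume volume :=
    (measurePreserving_add_right volume p).comp R.measurePreserving
  rw [← mp.measure_preimage hm.nullMeasurableSet]
  congr 1
  ext x
  have e1 : R x + p - q = R (x - w) := by rw [map_sub, hR]; abel
  simp only [mem_preimage, mem_sdiff, mem_ball_iff_norm, e1, add_sub_cancel_right, sub_zero,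
    LinearIsometryEquiv.norm_map, hw]

lemma chain_vol (p : ℕ → EE) {ρ : ℝ} (hρ : 0 < ρ) (k : ℕ) :
    volume (⋃ i ∈ Finset.range (k + 1), Metric.ball (p i) ρ) ≤
      ENNReal.ofReal (ρ ^ 2 * Real.pi) +
        ENNReal.ofReal (2 * ρ) * ∑ i ∈ Finset.range k, edist (p (i + 1)) (p i) := by
  induction k with
  | zero =>
    simp [ENNReal.ofReal_mul, ENNReal.ofReal_pow, hρ.le]
  | succ k ih =>
    rw [Finset.sum_range_succ, mul_add, ← add_assoc]
    have : (⋃ i ∈ Finset.range (k + 1 + 1), Metric.ball (p i) ρ) ⊆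
        (⋃ i ∈ Finset.range (k + 1), Metric.ball (p i) ρ) ∪
          (Metric.ball (p (k + 1)) ρ \ Metric.ball (p k) ρ) := by
      intro x hx
      simp only [mem_iUnion, Finset.mem_range, exists_prop, mem_union, mem_sdiff] at *
      obtain ⟨i, hi, hx⟩ := hx
      by_cases h : i = k + 1
      · subst h
        by_cases h' : x ∈ Metric.ball (p k) ρ
        · exact Or.inl ⟨k, by omega, h'⟩
        · exact Or.inr ⟨hx, h'⟩
      · exact Or.inl ⟨i, by omega, hx⟩
    refine (measure_mono this).trans ((measure_union_le _ _).trans ?_)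
    gcongr
    refine (disc_diff _ _ hρ).trans (le_of_eq ?_)
    rw [ENNReal.ofReal_mul (by positivity), edist_dist]

lemma tube_eps (γ : ℝ → EE) (hγ : ContinuousOn γ (Icc 0 1)) {L : ℝ} (hL : 0 ≤ L)
    (hlen : eVariationOn γ (Icc 0 1) ≤ ENNReal.ofReal L) {r ε : ℝ} (hr : 0 < r) (hε : 0 < ε) :
    volume (Metric.thickening r (γ '' Icc 0 1)) ≤
      ENNReal.ofReal ((r + ε) ^ 2 * Real.pi + 2 * (r + ε) * L) := by
  have huc := isCompact_Icc.uniformContinuousOn_of_continuous hγ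
  rw [Metric.uniformContinuousOn_iff] at huc
  obtain ⟨δ, δ0, hδ⟩ := huc ε hε
  obtain ⟨n, hn⟩ := exists_nat_one_div_lt δ0
  set N : ℝ := (n : ℝ) + 1 with hN
  have N0 : 0 < N := by positivity
  let u : ℕ → ℝ := fun i => min (i / N) 1
  have hu : Monotone u := by
    intro i j hij
    have : (i : ℝ) ≤ j := by exact_mod_cast hij
    exact min_le_min_right _ (by gcongr)
  have us : ∀ i, u i ∈ Icc (0:ℝ) 1 := fun i => ⟨le_min (by positivity) zero_le_one, min_le_right _ _⟩
  have h1 := chain_vol (fun i => γ (u i)) (add_pos hr hε) (n + 1)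
  have h2 := eVariationOn.sum_le (f := γ) (n := n + 1) hu us
  have hsub : Metric.thickening r (γ '' Icc 0 1) ⊆
      ⋃ i ∈ Finset.range (n + 1 + 1), Metric.ball (γ (u i)) (r + ε) := by
    intro x hx
    rw [Metric.mem_thickening_iff] at hx
    obtain ⟨_, ⟨t, ht, rfl⟩, hx⟩ := hx
    have hf := Nat.floor_le (mul_nonneg ht.1 N0.le)
    have hf' := Nat.lt_floor_add_one (t * N)
    set i := ⌊t * N⌋₊
    have hiN : (i : ℝ) ≤ N := by nlinarith [ht.2]
    have hi : i ≤ n + 1 := by rw [hN] at hiN; exact_mod_cast hiN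
    have hui : u i = i / N := min_eq_left ((div_le_one N0).2 hiN)
    simp only [mem_iUnion, Finset.mem_range, exists_prop]
    refine ⟨i, by omega, ?_⟩
    have hd : dist t (u i) < δ := by
      refine lt_of_le_of_lt ?_ hn
      rw [hui, Real.dist_eq, abs_le]
      have e : t - i / N = (t * N - i) / N := by field_simp
      rw [e]
      constructor
      · have : 0 ≤ (t * N - i) / N := div_nonneg (by linarith) N0.le
        have : 0 ≤ 1 / N := by positivity
        linarith
      · gcongr; linarith
    have := hδ t ht (u i) (us i) hd
    rw [Metric.mem_ball]
    linarith [dist_triangle x (γ t) (γ (u i))]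
  refine (measure_mono hsub).trans (h1.trans ?_)
  rw [ENNReal.ofReal_add (by positivity) (by positivity), ENNReal.ofReal_mul (p := 2 * (r + ε)) (by positivity)]
  gcongr
  exact h2.trans hlen

lemma tube (γ : ℝ → EE) (hγ : ContinuousOn γ (Icc 0 1)) {L : ℝ} (hL : 0 ≤ L)
    (hlen : eVariationOn γ (Icc 0 1) ≤ ENNReal.ofReal L) {r : ℝ} (hr : 0 < r) :
    volume (Metric.thickening r (γ '' Icc 0 1)) ≤
      ENNReal.ofReal (r ^ 2 * Real.pi + 2 * r * L) := by
  have hc : Continuous fun ε : ℝ => ENNReal.ofReal ((r + ε) ^ 2 * Real.pi + 2 * (r + ε) * L) :=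
    ENNReal.continuous_ofReal.comp (by fun_prop)
  have ht := (hc.tendsto 0).mono_left (nhdsWithin_le_nhds (s := Ioi 0))
  simp only [add_zero] at ht
  refine ge_of_tendsto ht ?_
  filter_upwards [self_mem_nhdsWithin] with ε hε
  exact tube_eps γ hγ hL hlen hr hε

lemma ball_real (c : EE) {s : ℝ} (hs : 0 ≤ s) :
    (volume (Metric.ball c s)).toReal = s ^ 2 * Real.pi := by
  rw [EuclideanSpace.volume_ball_fin_two, ENNReal.toReal_mul, ENNReal.toReal_pow,
    ENNReal.toReal_ofReal hs, ENNReal.toReal_ofReal Real.pi_pos.le]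

lemma finite_bound (K : Set EE) (bK : Bornology.IsBounded K) {L : ℝ} (hL : 0 ≤ L)
    (htube : ∀ r > 0, volume (Metric.thickening r K) ≤
      ENNReal.ofReal (r ^ 2 * Real.pi + 2 * r * L))
    (F : Finset (Set EE))
    (hF : ∀ C ∈ F, ∃ p ∉ K, C = connectedComponentIn Kᶜ p ∧ Bornology.IsBounded C)
    (hball : ∀ C ∈ F, ∃ c, Metric.ball c 1 ⊆ C) {r : ℝ} (hr : 0 < r) (hr1 : r < 1) :
    (F.card : ℝ) * (2 * Real.pi * (1 - r)) ^ 2 ≤ L ^ 2 := by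
  rcases F.eq_empty_or_nonempty with rfl | hne
  · simp; positivity
  choose! c hc using hball
  set X : Set EE := K ∪ ⋃ C ∈ F, C with hX
  have bX : Bornology.IsBounded X := by
    refine bK.union ((Bornology.isBounded_biUnion_finset F).2 fun C hC => ?_)
    obtain ⟨p, -, -, h⟩ := hF C hC
    exact h
  set A : Set EE := (Metric.thickening r Xᶜ)ᶜ with hA
  have memA : ∀ x, x ∈ A ↔ Metric.ball x r ⊆ X := by
    intro x
    rw [hA, mem_compl_iff, Metric.mem_thickening_iff]
    constructor
    · intro h y hy
      by_contra hyX
      exact h ⟨y, hyX, by rw [dist_comm]; exact hy⟩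
    · rintro h ⟨y, hy, hxy⟩
      exact hy (h (by rw [Metric.mem_ball, dist_comm]; exact hxy))
  have mA : MeasurableSet A := Metric.isOpen_thickening.measurableSet.compl
  have bA : Bornology.IsBounded A :=
    bX.subset fun x hx => (memA x).1 hx (Metric.mem_ball_self hr)
  have bT : Bornology.IsBounded (Metric.thickening r X) := bX.thickening
  -- area of the inner parallel set
  have disj : (F : Set (Set EE)).PairwiseDisjoint fun C => Metric.ball (c C) (1 - r) := by
    intro C hC D hD hCD
    apply Disjoint.mono ((Metric.ball_subset_ball (by linarith)).trans (hc C hC))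
      ((Metric.ball_subset_ball (by linarith)).trans (hc D hD))
    obtain ⟨p, -, rfl, -⟩ := hF C hC
    obtain ⟨q, -, rfl, -⟩ := hF D hD
    rw [Set.disjoint_left]
    intro x hx hx'
    exact hCD ((connectedComponentIn_eq hx).trans (connectedComponentIn_eq hx').symm)
  have hsubA : (⋃ C ∈ F, Metric.ball (c C) (1 - r)) ⊆ A := by
    intro x hx
    simp only [mem_iUnion, exists_prop] at hx
    obtain ⟨C, hC, hx⟩ := hx
    rw [memA]
    intro y hy
    right
    simp only [mem_iUnion, exists_prop]
    refine ⟨C, hC, hc C hC ?_⟩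
    rw [Metric.mem_ball] at *
    linarith [dist_triangle y x (c C)]
  have hvolA : (F.card : ℝ) * ((1 - r) ^ 2 * Real.pi) ≤ (volume A).toReal := by
    have h1 := measure_mono (μ := volume) hsubA
    rw [measure_biUnion_finset disj fun _ _ => measurableSet_ball] at h1
    have h2 := ENNReal.toReal_mono bA.measure_lt_top.ne h1
    rw [ENNReal.toReal_sum fun _ _ => Metric.isBounded_ball.measure_lt_top.ne] at h2
    simp only [ball_real _ (show (0:ℝ) ≤ 1 - r by linarith), Finset.sum_const,
      nsmul_eq_mul] at h2
    exact h2
  have cpos : (0 : ℝ) < F.card := by exact_mod_cast hne.card_pos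
  have pA : 0 < (volume A).toReal := by
    have : 0 < 1 - r := by linarith
    have := Real.pi_pos
    exact lt_of_lt_of_le (by positivity) hvolA
  have hB := ball_real (0 : EE) (show 0 ≤ 2 * r by linarith)
  have bm := bmE mA (measurableSet_ball (x := (0 : EE)) (ε := 2 * r))
    (Metric.isOpen_thickening (δ := r) (E := X)).measurableSet bA Metric.isBounded_ball bT pA
    (by rw [hB]; have := Real.pi_pos; positivity) (by
      intro p hp q hq
      rw [memA] at hp
      rw [mem_ball_zero_iff] at hq
      rw [Metric.mem_thickening_iff]
      refine ⟨p + (1 / 2 : ℝ) • q, hp ?_, ?_⟩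
      · rw [mem_ball_iff_norm, add_sub_cancel_left, norm_smul]; norm_num; linarith
      · have e : p + q - (p + (1 / 2 : ℝ) • q) = (1 / 2 : ℝ) • q := by module
        rw [dist_eq_norm, e, norm_smul]; norm_num; linarith)
  -- the shell is contained in the tube
  have hshell : Metric.thickening r X ⊆ A ∪ Metric.thickening r K := by
    intro x hx
    by_cases hxA : x ∈ A
    · exact Or.inl hxA
    right
    by_contra hxK
    rw [Metric.mem_thickening_iff] at hx hxK
    push Not at hxK
    rw [memA, not_subset] at hxA
    obtain ⟨y, hy, hxy⟩ := hx
    obtain ⟨z, hz, hzX⟩ := hxA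
    have hbK : Metric.ball x r ⊆ Kᶜ := by
      intro w hw hwK
      have := hxK w hwK
      rw [Metric.mem_ball, dist_comm] at hw
      linarith
    have hyb : y ∈ Metric.ball x r := by rw [Metric.mem_ball, dist_comm]; exact hxy
    rcases hy with hy | hy
    · exact hbK hyb hy
    simp only [mem_iUnion, exists_prop] at hy
    obtain ⟨C, hC, hyC⟩ := hy
    obtain ⟨p, -, rfl, -⟩ := hF C hC
    apply hzX
    right
    simp only [mem_iUnion, exists_prop]
    refine ⟨_, hC, ?_⟩
    rw [connectedComponentIn_eq hyC]
    exact (convex_ball x r).isPreconnected.subset_connectedComponentIn hyb hbK hz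
  have hvol : (volume (Metric.thickening r X)).toReal ≤
      (volume A).toReal + (r ^ 2 * Real.pi + 2 * r * L) := by
    have h1 := (measure_mono (μ := volume) hshell).trans (measure_union_le _ _)
    have h2 := h1.trans (add_le_add_right (htube r hr) _)
    have := Real.pi_pos
    rw [← ENNReal.ofReal_toReal bA.measure_lt_top.ne, ← ENNReal.ofReal_add (by positivity)
      (by positivity)] at h2
    exact ENNReal.toReal_le_of_le_ofReal (by positivity) h2
  have hfin := bm.trans hvol
  rw [hB] at hfin
  have hπ := Real.pi_pos
  have s1 := Real.sq_sqrt pA.le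
  have s0 := Real.sqrt_nonneg (volume A).toReal
  have e : √((2 * r) ^ 2 * Real.pi) = 2 * r * √Real.pi := by
    rw [Real.sqrt_mul (by positivity), Real.sqrt_sq (by positivity)]
  rw [e] at hfin
  have t1 := Real.sq_sqrt hπ.le
  have t0 := Real.sqrt_nonneg Real.pi
  set a := √(volume A).toReal
  set b := √Real.pi
  rw [← s1] at hfin hvolA
  have h3 : 2 * a * b ≤ L := by
    have : r * (2 * a * b) ≤ r * L := by
      rw [← t1] at hfin
      nlinarith [sq_nonneg (r * b)]
    exact le_of_mul_le_mul_left this hr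
  have h4 : (2 * a * b) ^ 2 ≤ L ^ 2 := pow_le_pow_left₀ (by positivity) h3 2
  calc (F.card : ℝ) * (2 * Real.pi * (1 - r)) ^ 2
      = 4 * Real.pi * ((F.card : ℝ) * ((1 - r) ^ 2 * Real.pi)) := by ring
    _ ≤ 4 * Real.pi * a ^ 2 := by gcongr
    _ = (2 * a * b) ^ 2 := by rw [mul_pow, mul_pow, t1]; ring
    _ ≤ _ := h4

lemma finite_bound' (K : Set EE) (bK : Bornology.IsBounded K) {L : ℝ} (hL : 0 ≤ L)
    (htube : ∀ r > 0, volume (Metric.thickening r K) ≤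
      ENNReal.ofReal (r ^ 2 * Real.pi + 2 * r * L))
    (F : Finset (Set EE))
    (hF : ∀ C ∈ F, ∃ p ∉ K, C = connectedComponentIn Kᶜ p ∧ Bornology.IsBounded C)
    (hball : ∀ C ∈ F, ∃ c, Metric.ball c 1 ⊆ C) :
    (F.card : ℝ) ≤ (L / (2 * Real.pi)) ^ 2 := by
  have hc : Continuous fun r : ℝ => (F.card : ℝ) * (2 * Real.pi * (1 - r)) ^ 2 := by fun_prop
  have ht := (hc.tendsto 0).mono_left (nhdsWithin_le_nhds (s := Ioi 0))
  simp only [sub_zero, mul_one] at ht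
  have hπ := Real.pi_pos
  rw [div_pow, le_div_iff₀ (by positivity)]
  refine le_of_tendsto ht ?_
  filter_upwards [Ioo_mem_nhdsGT (zero_lt_one (α := ℝ))] with r hr
  exact finite_bound K bK hL htube F hF hball hr.1 hr.2

end IsoAux

open IsoAux in
/-- **Bounding the number of regions of a disk diagram** (as in the proof of
Theorem 7.1).  If `γ` is a closed plane curve of finite length `ℓ` (total variation)
such that every bounded connected component of the complement of its image contains an
open ball of radius `1`, then the collection of bounded complementary components is
finite, of cardinality at most `(ℓ/(2π))²`. -/
theorem card_bounded_components_le
    (γ : ℝ → EuclideanSpace ℝ (Fin 2))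
    (hγ : ContinuousOn γ (Set.Icc 0 1)) (hloop : γ 0 = γ 1)
    (ℓ : ℝ) (hlen : eVariationOn γ (Set.Icc 0 1) = ENNReal.ofReal ℓ)
    (K : Set (EuclideanSpace ℝ (Fin 2))) (hK : K = γ '' Set.Icc 0 1)
    (hball : ∀ p ∉ K, Bornology.IsBounded (connectedComponentIn Kᶜ p) →
      ∃ c : EuclideanSpace ℝ (Fin 2), Metric.ball c 1 ⊆ connectedComponentIn Kᶜ p) :
    {C : Set (EuclideanSpace ℝ (Fin 2)) |
        ∃ p ∉ K, C = connectedComponentIn Kᶜ p ∧ Bornology.IsBounded C}.Finite ∧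
    ({C : Set (EuclideanSpace ℝ (Fin 2)) |
        ∃ p ∉ K, C = connectedComponentIn Kᶜ p ∧ Bornology.IsBounded C}.ncard : ℝ)
      ≤ (ℓ / (2 * Real.pi)) ^ 2 := by
  have hL : (0:ℝ) ≤ max ℓ 0 := le_max_right _ _
  have hlen' : eVariationOn γ (Set.Icc 0 1) ≤ ENNReal.ofReal (max ℓ 0) := by
    rw [hlen]; exact ENNReal.ofReal_le_ofReal (le_max_left _ _)
  have bK : Bornology.IsBounded K := by
    rw [hK]; exact (isCompact_Icc.image_of_continuousOn hγ).isBounded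
  have key : ∀ F : Finset (Set EE),
      (F : Set (Set EE)) ⊆ {C | ∃ p ∉ K, C = connectedComponentIn Kᶜ p ∧ Bornology.IsBounded C} →
      (F.card : ℝ) ≤ (ℓ / (2 * Real.pi)) ^ 2 := by
    intro F hF
    have h1 := finite_bound' K bK hL
      (fun r hr => by rw [hK]; exact tube γ hγ hL hlen' hr) F (fun C hC => hF hC) (by
        intro C hC
        obtain ⟨p, hp, rfl, hb⟩ := hF hC
        exact hball p hp hb)
    refine h1.trans ?_
    rw [div_pow, div_pow]
    gcongr ?_ / _
    rcases le_total 0 ℓ with h | h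
    · rw [max_eq_left h]
    · rw [max_eq_right h]; nlinarith [sq_nonneg ℓ]
  have hfin : {C : Set (EuclideanSpace ℝ (Fin 2)) |
        ∃ p ∉ K, C = connectedComponentIn Kᶜ p ∧ Bornology.IsBounded C}.Finite := by
    by_contra hinf
    obtain ⟨n, hn⟩ := exists_nat_gt ((ℓ / (2 * Real.pi)) ^ 2)
    obtain ⟨F, hF, hcard⟩ := Set.Infinite.exists_subset_card_eq hinf n
    have := key F hF
    rw [hcard] at this
    linarith
  refine ⟨hfin, ?_⟩
  rw [Set.ncard_eq_toFinset_card _ hfin]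
  exact key _ (by simp)

end
end

section
/- Let γ : [0,1] → ℝ² be a closed curve and let B₁, B₂, B₃, B₄ be open balls of radius 1 whose centres are pairwise at distance at least 2 (so the balls have pairwise disjoint interiors). If each Bᵢ is contained in some bounded complementary component of γ, then the length of γ is at least 8 + 2π. -/
open scoped ENNReal
noncomputable section

abbrev FB.E := EuclideanSpace ℝ (Fin 2)

/-- Projection of `v` on the direction of angle `θ`. -/
def FB.pr (v : FB.E) (θ : ℝ) : ℝ := v 0 * Real.cos θ + v 1 * Real.sin θ

lemma FB.pr_sub (v w : FB.E) (θ : ℝ) : FB.pr (v - w) θ = FB.pr v θ - FB.pr w θ := by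
  simp [FB.pr]; ring

lemma FB.pr_cont (v : FB.E) : Continuous (FB.pr v) := by
  unfold FB.pr; fun_prop

lemma FB.norm_sq (v : FB.E) : ‖v‖ ^ 2 = v 0 ^ 2 + v 1 ^ 2 := by
  simp [EuclideanSpace.norm_sq_eq]

lemma FB.pr_le (v : FB.E) (θ : ℝ) : |FB.pr v θ| ≤ ‖v‖ := by
  apply abs_le_of_sq_le_sq _ (norm_nonneg _)
  rw [FB.norm_sq, FB.pr]
  nlinarith [sq_nonneg (v 0 * Real.sin θ - v 1 * Real.cos θ), Real.sin_sq_add_cos_sq θ]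

lemma FB.integral_abs_cos (φ : ℝ) : ∫ θ in (0:ℝ)..Real.pi, |Real.cos (θ - φ)| = 2 := by
  rw [intervalIntegral.integral_comp_sub_right (fun x => |Real.cos x|) φ]
  have hp : Function.Periodic (fun x => |Real.cos x|) Real.pi := by
    intro x; simp [Real.cos_add_pi]
  have h := hp.intervalIntegral_add_eq (0 - φ) (-(Real.pi/2))
  have e1 : 0 - φ + Real.pi = Real.pi - φ := by ring
  have e2 : -(Real.pi/2) + Real.pi = Real.pi/2 := by ring
  rw [e1, e2] at h
  rw [h]
  have : ∫ x in -(Real.pi/2)..(Real.pi/2), |Real.cos x| = ∫ x in -(Real.pi/2)..(Real.pi/2), Real.cos x := by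
    apply intervalIntegral.integral_congr
    intro x hx
    rw [Set.uIcc_of_le (by linarith [Real.pi_pos])] at hx
    exact abs_of_nonneg (Real.cos_nonneg_of_mem_Icc hx)
  rw [this, integral_cos]; simp; norm_num

lemma FB.integral_pr (v : FB.E) : ∫ θ in (0:ℝ)..Real.pi, |FB.pr v θ| = 2 * ‖v‖ := by
  set z : ℂ := ⟨v 0, v 1⟩ with hz
  have h0 : ‖z‖ * Real.cos z.arg = v 0 := Complex.norm_mul_cos_arg z
  have h1 : ‖z‖ * Real.sin z.arg = v 1 := Complex.norm_mul_sin_arg z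
  have hn : ‖z‖ = ‖v‖ := by
    rw [← sq_eq_sq₀ (norm_nonneg _) (norm_nonneg _), FB.norm_sq, Complex.sq_norm, Complex.normSq_apply]
    simp [hz]; ring
  have : ∀ θ, |FB.pr v θ| = ‖v‖ * |Real.cos (θ - z.arg)| := by
    intro θ
    have e : FB.pr v θ = ‖v‖ * Real.cos (θ - z.arg) := by
      rw [FB.pr, ← h0, ← h1, Real.cos_sub, hn]; ring
    rw [e, abs_mul, abs_norm]
  simp only [this]
  rw [intervalIntegral.integral_const_mul, FB.integral_abs_cos]; ring

lemma FB.closed_sum (x : ℕ → ℝ) (n : ℕ) (h : x 0 = x n) (i j : ℕ) (hi : i ≤ n) (hj : j ≤ n) :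
    2 * |x i - x j| ≤ ∑ k ∈ Finset.range n, |x (k+1) - x k| := by
  wlog hij : i ≤ j generalizing i j
  · rw [abs_sub_comm]; exact this j i hj hi (by omega)
  have a1 := dist_le_Ico_sum_dist x (Nat.zero_le i)
  have a2 := dist_le_Ico_sum_dist x hij
  have a3 := dist_le_Ico_sum_dist x hj
  have e : ∑ k ∈ Finset.range n, |x (k+1) - x k| = ∑ k ∈ Finset.Ico 0 i, dist (x k) (x (k+1)) +
     ∑ k ∈ Finset.Ico i j, dist (x k) (x (k+1)) + ∑ k ∈ Finset.Ico j n, dist (x k) (x (k+1)) := by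
    rw [Finset.sum_Ico_consecutive _ (Nat.zero_le i) hij, Finset.sum_Ico_consecutive _ (Nat.zero_le j) hj, Finset.range_eq_Ico]
    simp only [dist_comm (x _) (x (_+1)), Real.dist_eq]
  rw [e]
  simp only [Real.dist_eq] at *
  have : |x i - x j| ≤ |x 0 - x i| + |x j - x n| := by
    rw [← h, abs_sub_comm (x 0), add_comm]
    calc _ = |(x i - x 0) + (x 0 - x j)| := by ring_nf
      _ ≤ _ := by rw [abs_sub_comm (x j), add_comm |x 0 - x j|]; exact abs_add_le _ _
  linarith

/-- Bounded components lie in the convex hull (support function form). -/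
lemma FB.support (K : Set FB.E) (hKc : IsCompact K) (c p : FB.E)
    (hp : Bornology.IsBounded (connectedComponentIn Kᶜ p))
    (hb : Metric.ball c 1 ⊆ connectedComponentIn Kᶜ p) (θ : ℝ) :
    ∃ x ∈ K, FB.pr c θ + 1 ≤ FB.pr x θ := by
  by_contra hcon
  push Not at hcon
  have hprc : Continuous (fun x : FB.E => FB.pr x θ) := by unfold FB.pr; fun_prop
  obtain ⟨r, hr0, hr1, hr⟩ : ∃ r : ℝ, 0 ≤ r ∧ r < 1 ∧ ∀ x ∈ K, FB.pr x θ < FB.pr c θ + r := by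
    rcases K.eq_empty_or_nonempty with h | h
    · exact ⟨0, le_rfl, one_pos, by simp [h]⟩
    · obtain ⟨m, hm, hmax⟩ := hKc.exists_isMaxOn h hprc.continuousOn
      have := hcon m hm
      obtain ⟨r, h1, h2⟩ := exists_between (max_lt (zero_lt_one) (show FB.pr m θ - FB.pr c θ < 1 by linarith))
      refine ⟨r, (le_max_left _ _).trans h1.le, h2, fun x hx => ?_⟩
      have h3 : FB.pr x θ ≤ FB.pr m θ := hmax hx
      have := (le_max_right 0 (FB.pr m θ - FB.pr c θ)).trans_lt h1
      linarith
  set u : FB.E := !₂[Real.cos θ, Real.sin θ] with hu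
  have hun : ‖u‖ = 1 := by
    rw [← sq_eq_sq₀ (norm_nonneg _) zero_le_one, FB.norm_sq]; simp [hu]
  have hpr : ∀ s : ℝ, FB.pr (c + s • u) θ = FB.pr c θ + s := by
    intro s; simp only [FB.pr, hu]; simp
    linear_combination s * Real.sin_sq_add_cos_sq θ
  set R : Set FB.E := (fun s : ℝ => c + s • u) '' Set.Ici r with hR
  have hRp : IsPreconnected R := isPreconnected_Ici.image _ (by fun_prop)
  have hRK : R ⊆ Kᶜ := by
    rintro _ ⟨s, hs, rfl⟩ hx
    have := hr _ hx
    simp only [hpr] at this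
    have : r ≤ s := hs
    linarith
  have hq : c + r • u ∈ connectedComponentIn Kᶜ p := hb (by
    simp [norm_smul, hun, abs_of_nonneg hr0, hr1])
  have hsub := hRp.subset_connectedComponentIn (x := c + r • u) ⟨r, Set.self_mem_Ici, rfl⟩ hRK
  rw [← connectedComponentIn_eq hq] at hsub
  obtain ⟨C, hC⟩ := (hp.subset hsub).exists_norm_le
  have h1 := hC (c + (max r (C + ‖c‖ + 1)) • u) ⟨_, Set.mem_Ici.2 (le_max_left _ _), rfl⟩
  have h2 := FB.pr_le (c + (max r (C + ‖c‖ + 1)) • u) θ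
  rw [hpr] at h2
  have h3 := abs_le.1 (FB.pr_le c θ)
  have := le_max_right r (C + ‖c‖ + 1)
  have := abs_le.1 (h2.trans h1)
  linarith

/-- Distance of two points of norm at least `2`, in terms of the cosine of the angle. -/
lemma FB.radial (a b : FB.E) (ha : 2 ≤ ‖a‖) (hb : 2 ≤ ‖b‖) :
    2 - 2 * (inner ℝ a b / (‖a‖ * ‖b‖)) ≤ ‖a - b‖ := by
  set k := inner ℝ a b / (‖a‖ * ‖b‖) with hk
  have hp : 0 < ‖a‖ * ‖b‖ := by positivity
  have hi : inner ℝ a b = k * (‖a‖ * ‖b‖) := by rw [hk]; field_simp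
  have hk1 : |k| ≤ 1 := abs_real_inner_div_norm_mul_norm_le_one a b
  have hk2 := abs_le.1 hk1
  have hs := norm_sub_sq_real a b
  rw [hi] at hs
  have h8 : 8 * (1 - k) ≤ ‖a - b‖ ^ 2 := by
    nlinarith [sq_nonneg (‖a‖ - ‖b‖), mul_nonneg (sub_nonneg.2 hk2.2)
      (show 0 ≤ ‖a‖ * ‖b‖ - 4 by nlinarith)]
  apply le_of_sq_le_sq _ (norm_nonneg _)
  nlinarith

lemma FB.unit_sum_aux (u v w : FB.E) (hu : ‖u‖ = 1) (hv : ‖v‖ = 1) (hw : ‖w‖ = 1)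
    (p q r : ℝ) (hq : 0 ≤ q) (hr : 0 ≤ r) (hqp : q ≤ p) (hrp : r ≤ p) (hp : 0 < p)
    (h : p • u + q • v + r • w = 0) :
    inner ℝ u v + inner ℝ v w + inner ℝ w u ≤ -1 := by
  have h1 : p ≤ q + r := by
    have e : p • u = -(q • v + r • w) := by
      rw [← sub_eq_zero, sub_neg_eq_add, ← add_assoc, h]
    have : ‖p • u‖ ≤ ‖q • v‖ + ‖r • w‖ := by rw [e, norm_neg]; exact norm_add_le _ _
    simpa [norm_smul, hu, hv, hw, abs_of_nonneg, hq, hr, hp.le] using this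
  have h2 : ‖u + v + w‖ ≤ 1 := by
    have e : p • (u + v + w) = (p - q) • v + (p - r) • w := by
      rw [← sub_eq_zero, ← h]; module
    have : ‖p • (u + v + w)‖ ≤ ‖(p - q) • v‖ + ‖(p - r) • w‖ := by rw [e]; exact norm_add_le _ _
    rw [norm_smul, norm_smul, norm_smul, hv, hw, Real.norm_of_nonneg hp.le,
      Real.norm_of_nonneg (sub_nonneg.2 hqp), Real.norm_of_nonneg (sub_nonneg.2 hrp)] at this
    nlinarith
  have h3 := norm_add_sq_real (u + v) w
  rw [norm_add_sq_real u v, inner_add_left, real_inner_comm w u, hu, hv, hw] at h3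
  have h4 : ‖u + v + w‖ ^ 2 ≤ 1 := by nlinarith [norm_nonneg (u + v + w)]
  linarith

lemma FB.unit_sum (u v w : FB.E) (hu : ‖u‖ = 1) (hv : ‖v‖ = 1) (hw : ‖w‖ = 1)
    (p q r : ℝ) (hp : 0 ≤ p) (hq : 0 ≤ q) (hr : 0 ≤ r) (hpos : 0 < p + q + r)
    (h : p • u + q • v + r • w = 0) :
    inner ℝ u v + inner ℝ v w + inner ℝ w u ≤ -1 := by
  by_cases h1 : q ≤ p ∧ r ≤ p
  · exact FB.unit_sum_aux u v w hu hv hw p q r hq hr h1.1 h1.2 (by linarith) h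
  by_cases h2 : p ≤ q ∧ r ≤ q
  · have := FB.unit_sum_aux v w u hv hw hu q r p hr hp h2.2 h2.1 (by linarith)
      (by rw [← h]; module)
    linarith
  have h3 : p ≤ r ∧ q ≤ r := by
    by_contra h3
    grind
  have := FB.unit_sum_aux w u v hw hu hv r p q hp hq h3.1 h3.2 (by linarith)
      (by rw [← h]; module)
  linarith

lemma FB.triangle (a b c : FB.E) (ha : 2 ≤ ‖a‖) (hb : 2 ≤ ‖b‖) (hc : 2 ≤ ‖c‖)
    (p q r : ℝ) (hp : 0 ≤ p) (hq : 0 ≤ q) (hr : 0 ≤ r) (hpos : 0 < p + q + r)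
    (h : p • a + q • b + r • c = 0) : 8 ≤ ‖a - b‖ + ‖b - c‖ + ‖c - a‖ := by
  have ha0 : 0 < ‖a‖ := by linarith
  have hb0 : 0 < ‖b‖ := by linarith
  have hc0 : 0 < ‖c‖ := by linarith
  have key := FB.unit_sum (‖a‖⁻¹ • a) (‖b‖⁻¹ • b) (‖c‖⁻¹ • c)
    (by rw [norm_smul, norm_inv, norm_norm]; field_simp)
    (by rw [norm_smul, norm_inv, norm_norm]; field_simp)
    (by rw [norm_smul, norm_inv, norm_norm]; field_simp)
    (p * ‖a‖) (q * ‖b‖) (r * ‖c‖) (by positivity) (by positivity) (by positivity)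
    (by nlinarith [mul_nonneg hp (sub_nonneg.2 ha), mul_nonneg hq (sub_nonneg.2 hb),
          mul_nonneg hr (sub_nonneg.2 hc)])
    (by
      rw [smul_smul, smul_smul, smul_smul, mul_assoc, mul_assoc, mul_assoc,
        mul_inv_cancel₀ ha0.ne', mul_inv_cancel₀ hb0.ne', mul_inv_cancel₀ hc0.ne']
      simpa using h)
  have e : ∀ x y : FB.E, inner ℝ (‖x‖⁻¹ • x) (‖y‖⁻¹ • y) = inner ℝ x y / (‖x‖ * ‖y‖) := by
    intro x y
    rw [real_inner_smul_left, real_inner_smul_right, div_eq_mul_inv, mul_inv]; ring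
  rw [e, e, e] at key
  have := FB.radial a b ha hb
  have := FB.radial b c hb hc
  have := FB.radial c a hc ha
  linarith

lemma FB.ii (v : FB.E) : IntervalIntegrable (fun θ => |FB.pr v θ|) MeasureTheory.volume 0 Real.pi :=
  (FB.pr_cont v).abs.intervalIntegrable _ _

/-- Triangle containing the fourth point. -/
lemma FB.tri_case (a b c d : FB.E) (had : 2 ≤ dist a d) (hbd : 2 ≤ dist b d) (hcd : 2 ≤ dist c d)
    (p q r s : ℝ) (hp : 0 ≤ p) (hq : 0 ≤ q) (hr : 0 ≤ r) (hpos : 0 < p + q + r)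
    (hs : p + q + r + s = 0)
    (h : p • a + q • b + r • c + s • d = 0) (H : ℝ → ℝ)
    (hH : IntervalIntegrable H MeasureTheory.volume 0 Real.pi)
    (h1 : ∀ θ, |FB.pr a θ - FB.pr b θ| ≤ H θ) (h2 : ∀ θ, |FB.pr b θ - FB.pr c θ| ≤ H θ)
    (h3 : ∀ θ, |FB.pr c θ - FB.pr a θ| ≤ H θ) : 8 ≤ ∫ θ in (0:ℝ)..Real.pi, H θ := by
  have key := FB.triangle (a - d) (b - d) (c - d) (by rwa [← dist_eq_norm])
    (by rwa [← dist_eq_norm]) (by rwa [← dist_eq_norm]) p q r hp hq hr hpos (by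
      have : s = -(p + q + r) := by linarith
      rw [← h, this]; module)
  simp only [sub_sub_sub_cancel_right] at key
  have hm : ∫ θ in (0:ℝ)..Real.pi, (|FB.pr (a - b) θ| + |FB.pr (b - c) θ| + |FB.pr (c - a) θ|)
      ≤ ∫ θ in (0:ℝ)..Real.pi, 2 * H θ := by
    apply intervalIntegral.integral_mono_on Real.pi_pos.le
      (((FB.ii _).add (FB.ii _)).add (FB.ii _)) (hH.const_mul 2)
    intro θ _
    have g1 := h1 θ
    have g2 := h2 θ
    have g3 := h3 θ
    simp only [FB.pr_sub]
    generalize FB.pr a θ = x at *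
    generalize FB.pr b θ = y at *
    generalize FB.pr c θ = z at *
    rw [abs_le] at g1 g2 g3
    rcases abs_cases (x - y) with ⟨e1, _⟩ | ⟨e1, _⟩ <;> rcases abs_cases (y - z) with ⟨e2, _⟩ | ⟨e2, _⟩ <;>
      rcases abs_cases (z - x) with ⟨e3, _⟩ | ⟨e3, _⟩ <;> rw [e1, e2, e3] <;> linarith
  rw [intervalIntegral.integral_add ((FB.ii _).add (FB.ii _)) (FB.ii _),
    intervalIntegral.integral_add (FB.ii _) (FB.ii _), FB.integral_pr, FB.integral_pr,
    FB.integral_pr, intervalIntegral.integral_const_mul] at hm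
  linarith

lemma FB.quad_real (a b c d p q r s H : ℝ) (hp : 0 ≤ p) (hr : 0 ≤ r) (hq : q ≤ 0) (hs : s ≤ 0)
    (hpos : 0 < p + r) (hsum : p + q + r + s = 0) (h : p * a + q * b + r * c + s * d = 0)
    (h1 : |a - b| ≤ H) (h2 : |b - c| ≤ H) (h3 : |c - d| ≤ H) (h4 : |d - a| ≤ H)
    (h5 : |a - c| ≤ H) (h6 : |b - d| ≤ H) :
    |a - b| + |b - c| + |c - d| + |d - a| ≤ 2 * H := by
  have k1 : min b d ≤ max a c := by
    by_contra! k
    have z : (p + q + r + s) * min b d = 0 := by rw [hsum, zero_mul]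
    nlinarith [z, mul_nonneg hp (sub_nonneg.2 (le_max_left a c)),
      mul_nonneg hr (sub_nonneg.2 (le_max_right a c)),
      mul_nonneg (neg_nonneg.2 hq) (sub_nonneg.2 (min_le_left b d)),
      mul_nonneg (neg_nonneg.2 hs) (sub_nonneg.2 (min_le_right b d)), mul_pos hpos (sub_pos.2 k)]
  have k2 : min a c ≤ max b d := by
    by_contra! k
    have z : (p + q + r + s) * max b d = 0 := by rw [hsum, zero_mul]
    nlinarith [z, mul_nonneg hp (sub_nonneg.2 (min_le_left a c)),
      mul_nonneg hr (sub_nonneg.2 (min_le_right a c)),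
      mul_nonneg (neg_nonneg.2 hq) (sub_nonneg.2 (le_max_left b d)),
      mul_nonneg (neg_nonneg.2 hs) (sub_nonneg.2 (le_max_right b d)), mul_pos hpos (sub_pos.2 k)]
  clear h hpos hsum hp hq hr hs
  rw [min_le_iff, le_max_iff, le_max_iff] at k1 k2
  rw [abs_le] at h1 h2 h3 h4 h5 h6
  rcases abs_cases (a - b) with ⟨e1, _⟩ | ⟨e1, _⟩ <;> rcases abs_cases (b - c) with ⟨e2, _⟩ | ⟨e2, _⟩ <;>
    rcases abs_cases (c - d) with ⟨e3, _⟩ | ⟨e3, _⟩ <;>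
    rcases abs_cases (d - a) with ⟨e4, _⟩ | ⟨e4, _⟩ <;> rw [e1, e2, e3, e4] <;>
    first
    | linarith
    | (rcases k1 with (k1 | k1) | (k1 | k1) <;> rcases k2 with (k2 | k2) | (k2 | k2) <;> linarith)

/-- Four points in convex position. -/
lemma FB.quad_case (a b c d : FB.E) (hab : 2 ≤ dist a b) (hbc : 2 ≤ dist b c) (hcd : 2 ≤ dist c d)
    (hda : 2 ≤ dist d a)
    (p q r s : ℝ) (hp : 0 ≤ p) (hr : 0 ≤ r) (hq : q ≤ 0) (hs : s ≤ 0) (hpos : 0 < p + r)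
    (hsum : p + q + r + s = 0)
    (h : p • a + q • b + r • c + s • d = 0) (H : ℝ → ℝ)
    (hH : IntervalIntegrable H MeasureTheory.volume 0 Real.pi)
    (h1 : ∀ θ, |FB.pr a θ - FB.pr b θ| ≤ H θ) (h2 : ∀ θ, |FB.pr b θ - FB.pr c θ| ≤ H θ)
    (h3 : ∀ θ, |FB.pr c θ - FB.pr d θ| ≤ H θ) (h4 : ∀ θ, |FB.pr d θ - FB.pr a θ| ≤ H θ)
    (h5 : ∀ θ, |FB.pr a θ - FB.pr c θ| ≤ H θ) (h6 : ∀ θ, |FB.pr b θ - FB.pr d θ| ≤ H θ) :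
    8 ≤ ∫ θ in (0:ℝ)..Real.pi, H θ := by
  have hm : ∫ θ in (0:ℝ)..Real.pi, (|FB.pr (a - b) θ| + |FB.pr (b - c) θ| + |FB.pr (c - d) θ|
      + |FB.pr (d - a) θ|) ≤ ∫ θ in (0:ℝ)..Real.pi, 2 * H θ := by
    apply intervalIntegral.integral_mono_on Real.pi_pos.le
      ((((FB.ii _).add (FB.ii _)).add (FB.ii _)).add (FB.ii _)) (hH.const_mul 2)
    intro θ _
    simp only [FB.pr_sub]
    refine FB.quad_real _ _ _ _ p q r s _ hp hr hq hs hpos hsum ?_ (h1 θ) (h2 θ) (h3 θ) (h4 θ)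
      (h5 θ) (h6 θ)
    have e : FB.pr (p • a + q • b + r • c + s • d) θ = 0 := by rw [h]; simp [FB.pr]
    rw [← e]; simp [FB.pr]; ring
  rw [intervalIntegral.integral_add (((FB.ii _).add (FB.ii _)).add (FB.ii _)) (FB.ii _),
    intervalIntegral.integral_add ((FB.ii _).add (FB.ii _)) (FB.ii _),
    intervalIntegral.integral_add (FB.ii _) (FB.ii _), FB.integral_pr, FB.integral_pr,
    FB.integral_pr, FB.integral_pr, intervalIntegral.integral_const_mul] at hm
  rw [dist_eq_norm] at hab hbc hcd hda
  linarith

lemma FB.four (c : Fin 4 → FB.E) (hdist : ∀ i j : Fin 4, i ≠ j → 2 ≤ dist (c i) (c j))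
    (H : ℝ → ℝ) (hH : IntervalIntegrable H MeasureTheory.volume 0 Real.pi)
    (hw : ∀ i j θ, |FB.pr (c i) θ - FB.pr (c j) θ| ≤ H θ) :
    8 ≤ ∫ θ in (0:ℝ)..Real.pi, H θ := by
  obtain ⟨f, hs, hv, hne⟩ : ∃ f : Fin 4 → ℝ, f 0 + f 1 + f 2 + f 3 = 0 ∧
      f 0 • c 0 + f 1 • c 1 + f 2 • c 2 + f 3 • c 3 = 0 ∧ ∃ i, f i ≠ 0 := by
    have : ¬ LinearIndependent ℝ (fun i => ((1 : ℝ), c i)) := by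
      intro hl
      have := hl.fintype_card_le_finrank
      simp at this
    rw [Fintype.not_linearIndependent_iff] at this
    obtain ⟨f, hf, hi⟩ := this
    rw [Fin.sum_univ_four] at hf
    refine ⟨f, ?_, ?_, hi⟩
    · simpa using congrArg Prod.fst hf
    · simpa using congrArg Prod.snd hf
  wlog h0 : 0 ≤ f 0 generalizing f
  · refine this (-f) ?_ ?_ ?_ ?_
    · simp only [Pi.neg_apply]; linarith
    · rw [← neg_eq_zero, ← hv]; simp only [Pi.neg_apply]; module
    · simpa using hne
    · simp only [Pi.neg_apply]; linarith
  have hne' : ¬ (f 0 = 0 ∧ f 1 = 0 ∧ f 2 = 0 ∧ f 3 = 0) := by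
    rintro ⟨z0, z1, z2, z3⟩
    obtain ⟨i, hi⟩ := hne
    fin_cases i <;> simp_all
  have tri : ∀ (g : Fin 4 → ℝ) (i j k l : Fin 4), i ≠ l → j ≠ l → k ≠ l → 0 ≤ g i → 0 ≤ g j →
      0 ≤ g k → 0 < g i + g j + g k → g i + g j + g k + g l = 0 →
      g i • c i + g j • c j + g k • c k + g l • c l = 0 → 8 ≤ ∫ θ in (0:ℝ)..Real.pi, H θ :=
    fun g i j k l hil hjl hkl gi gj gk gp gs gv =>
      FB.tri_case (c i) (c j) (c k) (c l) (hdist _ _ hil) (hdist _ _ hjl) (hdist _ _ hkl) _ _ _ _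
        gi gj gk gp gs gv H hH (hw _ _) (hw _ _) (hw _ _)
  have quad : ∀ (i j k l : Fin 4), i ≠ j → j ≠ k → k ≠ l → l ≠ i → 0 ≤ f i → f j ≤ 0 →
      0 ≤ f k → f l ≤ 0 → 0 < f i + f k → f i + f j + f k + f l = 0 →
      f i • c i + f j • c j + f k • c k + f l • c l = 0 → 8 ≤ ∫ θ in (0:ℝ)..Real.pi, H θ :=
    fun i j k l hij hjk hkl hli gi gj gk gl gp gs gv =>
      FB.quad_case (c i) (c j) (c k) (c l) (hdist _ _ hij) (hdist _ _ hjk) (hdist _ _ hkl)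
        (hdist _ _ hli) _ _ _ _
        gi gk gj gl gp gs gv H hH (hw _ _) (hw _ _) (hw _ _) (hw _ _) (hw _ _) (hw _ _)
  rcases le_or_gt 0 (f 1) with h1 | h1 <;> rcases le_or_gt 0 (f 2) with h2 | h2 <;>
    rcases le_or_gt 0 (f 3) with h3 | h3
  · exact absurd ⟨by linarith, by linarith, by linarith, by linarith⟩ hne'
  · exact tri f 0 1 2 3 (by decide) (by decide) (by decide) h0 h1 h2 (by linarith) hs hv
  · exact tri f 0 1 3 2 (by decide) (by decide) (by decide) h0 h1 h3 (by linarith) (by linarith)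
      (by rw [← hv]; module)
  · exact quad 0 2 1 3 (by decide) (by decide) (by decide) (by decide) h0 h2.le h1 h3.le
      (by linarith) (by linarith) (by rw [← hv]; module)
  · exact tri f 0 2 3 1 (by decide) (by decide) (by decide) h0 h2 h3 (by linarith) (by linarith)
      (by rw [← hv]; module)
  · exact quad 0 1 2 3 (by decide) (by decide) (by decide) (by decide) h0 h1.le h2 h3.le
      (by linarith) (by linarith) (by rw [← hv])
  · exact quad 0 1 3 2 (by decide) (by decide) (by decide) (by decide) h0 h1.le h3 h2.le
      (by linarith) (by linarith) (by rw [← hv]; module)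
  · refine tri (-f) 1 2 3 0 (by decide) (by decide) (by decide) ?_ ?_ ?_ ?_ ?_ ?_
    all_goals try simp only [Pi.neg_apply]
    all_goals try linarith
    rw [← neg_eq_zero, ← hv]; module

/-- **Four-disk lower bound** (Sections 6.4–6.6).  If a closed plane curve has four open
unit balls, with centres pairwise at distance at least `2`, each contained in some
bounded complementary component, then its length is at least `8 + 2π`. -/
theorem length_ge_of_four_unit_balls
    (γ : ℝ → EuclideanSpace ℝ (Fin 2))
    (hγ : ContinuousOn γ (Set.Icc 0 1)) (hloop : γ 0 = γ 1)
    (K : Set (EuclideanSpace ℝ (Fin 2))) (hK : K = γ '' Set.Icc 0 1)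
    (c : Fin 4 → EuclideanSpace ℝ (Fin 2))
    (hdist : ∀ i j : Fin 4, i ≠ j → 2 ≤ dist (c i) (c j))
    (hball : ∀ i : Fin 4, ∃ p ∉ K,
      Bornology.IsBounded (connectedComponentIn Kᶜ p) ∧
      Metric.ball (c i) 1 ⊆ connectedComponentIn Kᶜ p) :
    ENNReal.ofReal (8 + 2 * Real.pi) ≤ eVariationOn γ (Set.Icc 0 1) := by
  by_cases htop : eVariationOn γ (Set.Icc 0 1) = ⊤
  · rw [htop]; exact le_top
  apply ENNReal.ofReal_le_of_le_toReal
  have hKc : IsCompact K := by rw [hK]; exact isCompact_Icc.image_of_continuousOn hγ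
  have hup : ∀ i θ, ∃ x ∈ K, FB.pr (c i) θ + 1 ≤ FB.pr x θ := by
    intro i θ
    obtain ⟨p, -, hp, hb⟩ := hball i
    exact FB.support K hKc (c i) p hp hb θ
  have hpi : ∀ (x : FB.E) θ, FB.pr x (θ + Real.pi) = - FB.pr x θ := by
    intro x θ; simp [FB.pr]; ring
  have hunif := isCompact_Icc.uniformContinuousOn_of_continuous hγ
  rw [Metric.uniformContinuousOn_iff] at hunif
  apply le_of_forall_pos_le_add
  intro η hη
  set ε := η / (2 * Real.pi) with hε
  have hε0 : 0 < ε := by have := Real.pi_pos; positivity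
  have hεη : 2 * Real.pi * ε = η := by rw [hε]; have := Real.pi_pos; field_simp
  obtain ⟨δ, hδ, hd⟩ := hunif ε hε0
  obtain ⟨m, hm⟩ := exists_nat_one_div_lt hδ
  set n := m + 1 with hn
  have hn0 : (0 : ℝ) < n := by positivity
  set t : ℕ → ℝ := fun k => k / n with ht
  have htm : ∀ k ≤ n, t k ∈ Set.Icc (0:ℝ) 1 := by
    intro k hk
    have : (k : ℝ) ≤ n := by exact_mod_cast hk
    exact ⟨by positivity, by rw [ht]; simpa using (div_le_one hn0).2 this⟩
  have happ : ∀ x ∈ K, ∃ k ≤ n, ∀ θ, |FB.pr x θ - FB.pr (γ (t k)) θ| ≤ ε := by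
    rw [hK]
    rintro _ ⟨s, hs, rfl⟩
    have hsn : 0 ≤ s * n := mul_nonneg hs.1 hn0.le
    have hk : ⌊s * n⌋₊ ≤ n := by
      apply Nat.floor_le_of_le; nlinarith [hs.2]
    refine ⟨⌊s * n⌋₊, hk, fun θ => ?_⟩
    rw [← FB.pr_sub]
    refine (FB.pr_le _ _).trans ?_
    rw [← dist_eq_norm]
    refine (hd s hs _ (htm _ hk) ?_).le
    refine lt_of_le_of_lt ?_ hm
    have f1 := Nat.floor_le hsn
    have f2 := (Nat.lt_floor_add_one (s * n)).le
    have e : s - t ⌊s * n⌋₊ = (s * n - ⌊s * n⌋₊) / n := by simp only [ht]; field_simp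
    rw [Real.dist_eq, e, abs_of_nonneg (div_nonneg (by linarith) hn0.le)]
    have : ((m : ℝ) + 1) = n := by rw [hn]; push_cast; ring
    rw [this]
    gcongr
    linarith
  have hclosed : γ (t 0) = γ (t n) := by
    have e0 : t 0 = 0 := by simp [ht]
    have e1 : t n = 1 := by simp only [ht]; exact div_self hn0.ne'
    rw [e0, e1, hloop]
  set S : ℝ := ∑ k ∈ Finset.range n, ‖γ (t (k+1)) - γ (t k)‖ with hS
  have hSV : S ≤ (eVariationOn γ (Set.Icc 0 1)).toReal := by
    have h1 : (∑ k ∈ Finset.range n, edist (γ (t (k + 1))) (γ (t k))) ≤ eVariationOn γ (Set.Icc 0 1) := by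
      apply eVariationOn.sum_le_of_monotoneOn_Iic
      · intro a _ b _ hab
        simp only [ht]
        gcongr
      · exact htm
    have h2 : (∑ k ∈ Finset.range n, edist (γ (t (k + 1))) (γ (t k))) = ENNReal.ofReal S := by
      rw [hS, ENNReal.ofReal_sum_of_nonneg (fun _ _ => norm_nonneg _)]
      simp only [edist_dist, dist_eq_norm]
    rw [h2] at h1
    exact (ENNReal.ofReal_le_iff_le_toReal htop).1 h1
  set G : ℝ → ℝ := fun θ => ∑ k ∈ Finset.range n, |FB.pr (γ (t (k+1)) - γ (t k)) θ| with hG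
  have hGc : Continuous G := continuous_finsetSum _ (fun k _ => (FB.pr_cont _).abs)
  have hGi : ∫ θ in (0:ℝ)..Real.pi, G θ = 2 * S := by
    simp only [hG]
    rw [intervalIntegral.integral_finsetSum (fun k _ => FB.ii _), hS, Finset.mul_sum]
    simp only [FB.integral_pr]
  have hw : ∀ i j θ, FB.pr (c i) θ - FB.pr (c j) θ ≤ (1/2) * G θ + (2 * ε - 2) := by
    intro i j θ
    obtain ⟨x, hx, hxi⟩ := hup i θ
    obtain ⟨y, hy, hyj⟩ := hup j (θ + Real.pi)
    rw [hpi, hpi] at hyj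
    obtain ⟨k, hk, hkx⟩ := happ x hx
    obtain ⟨l, hl, hly⟩ := happ y hy
    have a1 := abs_le.1 (hkx θ)
    have a2 := abs_le.1 (hly θ)
    have a3 := FB.closed_sum (fun k => FB.pr (γ (t k)) θ) n (by simp only [hclosed]) k l hk hl
    have a4 := le_abs_self (FB.pr (γ (t k)) θ - FB.pr (γ (t l)) θ)
    simp only [hG, FB.pr_sub]
    linarith [a1.1, a1.2, a2.1, a2.2]
  have key := FB.four c hdist (fun θ => (1/2) * G θ + (2 * ε - 2))
    (Continuous.intervalIntegrable (by fun_prop) _ _)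
    (fun i j θ => abs_le.2 ⟨by linarith [hw j i θ], hw i j θ⟩)
  rw [intervalIntegral.integral_add (Continuous.intervalIntegrable (by fun_prop) _ _)
    (by simp), intervalIntegral.integral_const_mul, hGi,
    intervalIntegral.integral_const] at key
  simp only [smul_eq_mul, sub_zero] at key
  linarith

end
end
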